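/- Let m ≥ 1 be an integer. For every θ = (θ₁,…,θ_m) ∈ ℝ^m, the following identity of complex numbers holds: A_δ(θ) · ∏_{j=1}^m (2cos θ_j) = ( A_{δ+λ⁺}(θ) + A_{δ+λ⁻}(θ) ) + Σ_{j=1}^{⌊m/2⌋} (−1)^j · N(2j, j) · A_{δ+ω_{m−2j}}(θ), where λ⁺ = (1,1,…,1) and λ⁻ = (1,…,1,−1). (This is the k = m case of the expansion of the elementary symmetric function S_{m,m} of the 2cos θ_j into irreducible characters of SO(2m), multiplied through by the Weyl denominator A_δ.) -/

import Mathlib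

open scoped BigOperators

/-- The alternating sum `A_λ(θ) = Σ_{w ∈ W_m} sgn(w) exp(i Σ_j (w·λ)_j θ_j)`, where
`W_m` consists of pairs `(σ, ε)` with `σ` a permutation of `{1,…,m}` and
`ε ∈ {±1}^m` with `∏ ε_j = 1`, and `(w·λ)_j = ε_j λ_{σ⁻¹(j)}`. -/
noncomputable def Avec (m : ℕ) (lam : Fin m → ℤ) (θ : Fin m → ℝ) : ℂ :=
  ∑ σ : Equiv.Perm (Fin m),
    ∑ ε ∈ Finset.univ.filter (fun ε : Fin m → ℤˣ => (∏ j, (ε j : ℤ)) = 1),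
      ((Equiv.Perm.sign σ : ℤ) : ℂ) *
        Complex.exp (Complex.I *
          ∑ j : Fin m, (((ε j : ℤ) * lam (σ⁻¹ j) : ℤ) : ℂ) * ((θ j : ℝ) : ℂ))

/-- `δ = (m-1, m-2, …, 1, 0)`. -/
def deltaVec (m : ℕ) : Fin m → ℤ := fun j => (m : ℤ) - 1 - (j : ℤ)

/-- `ω_q`: first `q` entries equal to `1`, the rest `0`. -/
def omegaVec (m q : ℕ) : Fin m → ℤ := fun j => if (j : ℕ) < q then 1 else 0

/-- `N₀(n,k)`: the number of `k`-tuples `(j₁,…,j_k)` of integers with `1 ≤ j₁`,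
`j_{i+1} ≥ j_i + 2`, and `j_k ≤ n − 1`. -/
noncomputable def N0 (n k : ℕ) : ℕ :=
  Nat.card {t : Fin k → ℤ //
    (∀ h : 0 < k, 1 ≤ t ⟨0, h⟩) ∧
    (∀ i : ℕ, ∀ h : i + 1 < k, t ⟨i, by omega⟩ + 2 ≤ t ⟨i + 1, h⟩) ∧
    (∀ h : 0 < k, t ⟨k - 1, by omega⟩ ≤ (n : ℤ) - 1)}

/-- `N(n,0) = 1` and `N(n,k) = N₀(n,k) + N₀(n−2,k−1)` for `k ≥ 1`. -/
noncomputable def Nfun (n k : ℕ) : ℕ := if k = 0 then 1 else N0 n k + N0 (n - 2) (k - 1)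

/-!
Adding to `A_λ` the alternating sum of `λ` with one entry negated turns the sum over even sign
changes into a sum over all sign changes, which is `det (2 cos (λ_i θ_j))`. When `λ` has a zero
entry the two sums agree, so `A_λ` is half of this determinant; in particular this holds for `δ`
and for `δ + ω_q` with `q < m`.

Multiplying column `j` of the determinant of `δ` by `2 cos θ_j` replaces the row with frequency `l`
by the sum of those with frequencies `l + 1` and `l - 1`. The resulting determinant is expanded by
bordering the rows of frequencies `m, m - 1, …, 0` with the column `1, 0, -1, 0, 1, …`, which is
annihilated by the relation between frequencies `l + 1` and `l - 1`. Deleting the row of frequency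
`2j` leaves exactly the frequencies `δ + ω_{m-2j}`, and the coefficient `N(2j, j) = 2` compensates
the factor one half.
-/

section Counting

lemma eq_two_mul_add_one_of_gap_two {n : ℕ} {t : Fin (n + 1) → ℤ} (hfirst : 1 ≤ t 0)
    (hgap : ∀ i : Fin n, t i.castSucc + 2 ≤ t i.succ) (hlast : t (Fin.last n) ≤ 2 * n + 1)
    (i : Fin (n + 1)) : t i = 2 * i + 1 := by
  have hmono : Monotone fun i : Fin (n + 1) => t i - 2 * i := by
    refine Fin.monotone_iff_le_succ.2 fun i => ?_
    have := hgap i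
    simp only [Fin.val_castSucc, Fin.val_succ]
    omega
  have hlower : t 0 - 2 * ((0 : Fin (n + 1)) : ℕ) ≤ t i - 2 * i := hmono (Fin.zero_le i)
  have hupper : t i - 2 * i ≤ t (Fin.last n) - 2 * (Fin.last n : ℕ) := hmono (Fin.le_last i)
  simp only [Fin.val_zero, Fin.val_last] at hlower hupper
  omega

lemma N0_two_mul_self (k : ℕ) : N0 (2 * k) k = 1 := by
  rw [N0, Nat.card_eq_one_iff_exists]
  refine ⟨⟨fun i => 2 * i + 1, fun _ => by simp, fun i _ => by push_cast; omega,
    fun _ => by simp only; omega⟩, ?_⟩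
  rintro ⟨t, hfirst, hgap, hlast⟩
  refine Subtype.ext (funext fun i => ?_)
  obtain _ | n := k
  · exact i.elim0
  · refine eq_two_mul_add_one_of_gap_two (hfirst n.succ_pos) (fun i => hgap i (by omega)) ?_ i
    refine (hlast n.succ_pos).trans ?_
    push_cast
    omega

lemma Nfun_two_mul_self {k : ℕ} (hk : k ≠ 0) : Nfun (2 * k) k = 2 := by
  rw [Nfun, if_neg hk, show 2 * k - 2 = 2 * (k - 1) by omega, N0_two_mul_self, N0_two_mul_self]

end Counting

section BorderedDeterminants

variable {R : Type*} [CommRing R] {n : ℕ}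

lemma det_of_vecCons (v : Fin (n + 1) → R) (A : Matrix (Fin (n + 1)) (Fin n) R) :
    (Matrix.of fun i => Matrix.vecCons (v i) (A i)).det =
      ∑ i : Fin (n + 1), (-1) ^ (i : ℕ) * v i * (A.submatrix i.succAbove id).det :=
  Matrix.det_succ_column_zero _

-- Compare the expansions of `[v | A]` and `P * [v | A] = [P v | P A]` along their first columns.
lemma det_submatrix_mul_of_mulVec_eq_single {P : Matrix (Fin (n + 1)) (Fin (n + 1)) R}
    {v : Fin (n + 1) → R} {k : Fin (n + 1)} (hv : P.mulVec v = Pi.single k 1)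
    (A : Matrix (Fin (n + 1)) (Fin n) R) :
    (-1) ^ (k : ℕ) * ((P * A).submatrix k.succAbove id).det =
      P.det * ∑ i : Fin (n + 1), (-1) ^ (i : ℕ) * v i * (A.submatrix i.succAbove id).det := by
  have hmul : P * Matrix.of (fun i => Matrix.vecCons (v i) (A i)) =
      Matrix.of fun i => Matrix.vecCons ((Pi.single k 1 : Fin (n + 1) → R) i) ((P * A) i) := by
    ext i j
    refine Fin.cases ?_ (fun j => rfl) j
    exact congrFun hv i
  rw [← det_of_vecCons v A, ← Matrix.det_mul, hmul, det_of_vecCons,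
    Finset.sum_eq_single k (fun i _ hi => by simp [hi]) (by simp)]
  simp

variable (R) in
/-- The matrix whose left multiplication adds row `τ r` to row `r`, for every row but the last. -/
def addRowMatrix (τ : Fin n → Fin (n + 1)) :
    Matrix (Fin (n + 1)) (Fin (n + 1)) R :=
  Matrix.of (Fin.snoc (α := fun _ => Fin (n + 1) → R)
    (fun r => Pi.single r.castSucc 1 + Pi.single (τ r) 1) (Pi.single (Fin.last n) 1))

lemma addRowMatrix_last (τ : Fin n → Fin (n + 1)) :
    addRowMatrix R τ (Fin.last n) = Pi.single (Fin.last n) 1 := by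
  ext j
  rw [addRowMatrix, Matrix.of_apply, Fin.snoc_last]

lemma addRowMatrix_castSucc (τ : Fin n → Fin (n + 1)) (r : Fin n) :
    addRowMatrix R τ r.castSucc = Pi.single r.castSucc 1 + Pi.single (τ r) 1 := by
  ext j
  rw [addRowMatrix, Matrix.of_apply, Fin.snoc_castSucc]

lemma addRowMatrix_isUpperTriangular {τ : Fin n → Fin (n + 1)} (hτ : ∀ r, r.castSucc ≤ τ r) :
    (addRowMatrix R τ).IsUpperTriangular := by
  intro i j hji
  change j < i at hji
  induction i using Fin.lastCases with
  | last => rw [addRowMatrix_last, Pi.single_eq_of_ne hji.ne]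
  | cast r =>
    rw [addRowMatrix_castSucc, Pi.add_apply, Pi.single_eq_of_ne hji.ne,
      Pi.single_eq_of_ne (hji.trans_le (hτ r)).ne, add_zero]

lemma det_addRowMatrix {τ : Fin n → Fin (n + 1)} (hτ : ∀ r, r.castSucc ≤ τ r) :
    (addRowMatrix R τ).det = ∏ r, if τ r = r.castSucc then 2 else 1 := by
  rw [Matrix.det_of_isUpperTriangular (addRowMatrix_isUpperTriangular hτ),
    Fin.prod_univ_castSucc, addRowMatrix_last, Pi.single_eq_same, mul_one]
  refine Finset.prod_congr rfl fun r _ => ?_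
  rw [addRowMatrix_castSucc, Pi.add_apply, Pi.single_eq_same, Pi.single_apply]
  split_ifs <;> simp_all [one_add_one_eq_two]

lemma addRowMatrix_mulVec {τ : Fin n → Fin (n + 1)} {v : Fin (n + 1) → R}
    (hlast : v (Fin.last n) = 1) (hv : ∀ r, v r.castSucc + v (τ r) = 0) :
    (addRowMatrix R τ).mulVec v = Pi.single (Fin.last n) 1 := by
  ext i
  induction i using Fin.lastCases with
  | last => rw [Matrix.mulVec, addRowMatrix_last, single_one_dotProduct, hlast, Pi.single_eq_same]
  | cast r =>
    rw [Matrix.mulVec, addRowMatrix_castSucc, add_dotProduct, single_one_dotProduct,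
      single_one_dotProduct, hv, Pi.single_eq_of_ne r.castSucc_ne_last]

lemma det_add_row_of_le {τ : Fin n → Fin (n + 1)} (hτ : ∀ r, r.castSucc ≤ τ r)
    {v : Fin (n + 1) → R} (hlast : v (Fin.last n) = 1) (hv : ∀ r, v r.castSucc + v (τ r) = 0)
    (A : Matrix (Fin (n + 1)) (Fin n) R) :
    (-1) ^ n * (Matrix.of fun r => A r.castSucc + A (τ r)).det =
      (∏ r, if τ r = r.castSucc then 2 else 1) *
        ∑ i : Fin (n + 1), (-1) ^ (i : ℕ) * v i * (A.submatrix i.succAbove id).det := by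
  have hrows : (addRowMatrix R τ * A).submatrix (Fin.last n).succAbove id =
      Matrix.of fun r => A r.castSucc + A (τ r) := by
    ext r j
    simp [Matrix.mul_apply_eq_vecMul, addRowMatrix_castSucc, Matrix.add_vecMul]
  rw [← det_addRowMatrix hτ,
    ← det_submatrix_mul_of_mulVec_eq_single (addRowMatrix_mulVec hlast hv), hrows, Fin.val_last]

end BorderedDeterminants

section ShiftedRows

/-- The sequence `1, 0, -1, 0, 1, …`, the solution of `x (k + 2) + x k = 0` that borders the
determinant in the expansion below. -/
def alternatingBorder (R : Type*) [CommRing R] : ℕ → R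
  | 0 => 1
  | 1 => 0
  | k + 2 => -alternatingBorder R k

variable {R : Type*} [CommRing R]

lemma alternatingBorder_two_mul (j : ℕ) : alternatingBorder R (2 * j) = (-1) ^ j := by
  induction j with
  | zero => simp [alternatingBorder]
  | succ j ih => rw [Nat.mul_succ, alternatingBorder, ih, pow_succ, mul_neg_one]

lemma alternatingBorder_of_odd {k : ℕ} (hk : Odd k) : alternatingBorder R k = 0 := by
  obtain ⟨j, rfl⟩ := hk
  induction j with
  | zero => simp [alternatingBorder]
  | succ j ih => rw [show 2 * (j + 1) + 1 = 2 * j + 1 + 2 by ring, alternatingBorder, ih, neg_zero]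

lemma sum_neg_one_pow_mul_alternatingBorder (m : ℕ) (f : Fin (m + 1) → R) :
    ∑ i : Fin (m + 1), (-1) ^ (i : ℕ) * alternatingBorder R (m - i) * f i =
      (-1) ^ m * ∑ j ∈ Finset.range (m / 2 + 1), (-1) ^ j * f ⟨m - 2 * j, by omega⟩ := by
  rw [Finset.mul_sum]
  symm
  refine Finset.sum_of_injOn (fun j => ⟨m - 2 * j, by omega⟩) ?_ (fun _ _ => Finset.mem_univ _)
    (fun i _ hi => ?_) (fun j hj => ?_)
  · intro j hj j' hj' h
    simp only [Finset.coe_range, Set.mem_Iio, Fin.mk.injEq] at hj hj' h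
    omega
  · have hodd : Odd (m - i) := by
      by_contra heven
      obtain ⟨j, hj⟩ := even_iff_two_dvd.1 (Nat.not_odd_iff_even.1 heven)
      refine hi ⟨j, ?_, Fin.ext ?_⟩
      · simp only [Finset.coe_range, Set.mem_Iio]
        omega
      · simp only
        omega
    rw [alternatingBorder_of_odd hodd, mul_zero, zero_mul]
  · rw [Finset.mem_range] at hj
    have hparity : Even m ↔ Even (m - 2 * j) := by
      rw [Nat.even_iff, Nat.even_iff]
      omega
    rw [Nat.sub_sub_self (by omega), alternatingBorder_two_mul, ← mul_assoc,
      neg_one_pow_congr hparity]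

lemma deltaVec_add_omegaVec {m : ℕ} (q : Fin (m + 1)) (r : Fin m) :
    deltaVec m r + omegaVec m q r = m - (q.succAbove r : ℕ) := by
  simp only [deltaVec, omegaVec, Fin.succAbove, Fin.lt_def, Fin.val_castSucc]
  split_ifs <;> simp <;> omega

/-- The index `r + 2`, with `m + 1` folded back to `m - 1`. When row `i` carries the frequency
`m - i`, it is the row of frequency `δ_r - 1`, frequencies `-1` and `1` being identified. -/
def foldedAddTwo {m : ℕ} (r : Fin m) : Fin (m + 1) :=
  if h : (r : ℕ) + 2 ≤ m then ⟨r + 2, by omega⟩ else r.castSucc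

lemma castSucc_le_foldedAddTwo {m : ℕ} (r : Fin m) : r.castSucc ≤ foldedAddTwo r := by
  rw [foldedAddTwo, Fin.le_def]
  split_ifs <;> simp

lemma foldedAddTwo_eq_castSucc_iff {m : ℕ} {r : Fin m} :
    foldedAddTwo r = r.castSucc ↔ (r : ℕ) = m - 1 := by
  rw [foldedAddTwo, Fin.ext_iff]
  split_ifs <;> simp <;> omega

lemma alternatingBorder_add_foldedAddTwo {m : ℕ} (r : Fin m) :
    alternatingBorder R (m - (r.castSucc : ℕ)) + alternatingBorder R (m - (foldedAddTwo r : ℕ)) =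
      0 := by
  rw [foldedAddTwo, Fin.val_castSucc]
  split_ifs with h
  · rw [show m - (r : ℕ) = m - (r + 2) + 2 by omega, alternatingBorder, neg_add_cancel]
  · rw [Fin.val_castSucc, show m - (r : ℕ) = 1 by omega, alternatingBorder, add_zero]

lemma apply_sub_foldedAddTwo {α : Type*} {m : ℕ} {a : ℤ → α} (ha : a (-1) = a 1) (r : Fin m) :
    a (m - (foldedAddTwo r : ℕ)) = a (deltaVec m r - 1) := by
  rw [foldedAddTwo, deltaVec]
  split_ifs with h
  · congr 1
    push_cast
    ring
  · rw [Fin.val_castSucc, show ((r : ℕ) : ℤ) = m - 1 by omega, sub_self, zero_sub, ha,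
      sub_sub_cancel]

lemma det_deltaVec_shift {m : ℕ} (hm : 1 ≤ m) {a : ℤ → Fin m → R} (ha : a (-1) = a 1) :
    (Matrix.of fun r => a (deltaVec m r + 1) + a (deltaVec m r - 1)).det =
      2 * ∑ j ∈ Finset.range (m / 2 + 1), (-1) ^ j *
        (Matrix.of fun r => a (deltaVec m r + omegaVec m (m - 2 * j) r)).det := by
  let A : Matrix (Fin (m + 1)) (Fin m) R := Matrix.of fun i => a (m - (i : ℕ))
  have hA (i : Fin (m + 1)) : A i = a (m - (i : ℕ)) := rfl
  have hrow (r : Fin m) :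
      A r.castSucc + A (foldedAddTwo r) = a (deltaVec m r + 1) + a (deltaVec m r - 1) := by
    have hraise : deltaVec m r + 1 = m - (r.castSucc : ℕ) := by
      rw [deltaVec, Fin.val_castSucc]
      ring
    rw [hA, hA, apply_sub_foldedAddTwo ha, hraise]
  have hminor (q : Fin (m + 1)) : A.submatrix q.succAbove id =
      Matrix.of fun r => a (deltaVec m r + omegaVec m q r) := by
    ext r j
    simp [A, deltaVec_add_omegaVec]
  have hfixed : (∏ r : Fin m, if foldedAddTwo r = r.castSucc then (2 : R) else 1) = 2 := by
    have hlast (r : Fin m) : foldedAddTwo r = r.castSucc ↔ r = ⟨m - 1, by omega⟩ :=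
      foldedAddTwo_eq_castSucc_iff.trans (Fin.ext_iff (b := ⟨m - 1, by omega⟩)).symm
    simp [hlast]
  have hexpand := det_add_row_of_le castSucc_le_foldedAddTwo
    (v := fun i => alternatingBorder R (m - i)) (by simp [alternatingBorder])
    alternatingBorder_add_foldedAddTwo A
  simp only [hfixed, sum_neg_one_pow_mul_alternatingBorder, hrow, hminor] at hexpand
  rw [mul_left_comm] at hexpand
  exact (isUnit_one.neg.pow m).mul_left_cancel hexpand

end ShiftedRows

section SignChanges

variable {ι : Type*} [Fintype ι] [DecidableEq ι]

lemma prod_mul_mulSingle_neg_one (ε : ι → ℤˣ) (k : ι) :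
    ∏ j, ((ε * Pi.mulSingle k (-1) : ι → ℤˣ) j : ℤ) = -∏ j, (ε j : ℤ) := by
  have hsingle : ∏ j, (Pi.mulSingle k (-1) : ι → ℤˣ) j = -1 := by
    simp [Finset.prod_pi_mulSingle']
  simp only [← Units.coe_prod, Pi.mul_apply, Finset.prod_mul_distrib, hsingle, mul_neg, mul_one,
    Units.val_neg]

lemma sum_even_signs_add_flip {M : Type*} [AddCommMonoid M] (k : ι) (f : (ι → ℤˣ) → M) :
    ∑ ε : ι → ℤˣ with ∏ j, (ε j : ℤ) = 1, f ε +
      ∑ ε : ι → ℤˣ with ∏ j, (ε j : ℤ) = 1, f (ε * Pi.mulSingle k (-1)) = ∑ ε, f ε := by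
  rw [← Finset.sum_filter_add_sum_filter_not Finset.univ fun ε : ι → ℤˣ => ∏ j, (ε j : ℤ) = 1]
  congr 1
  refine Finset.sum_equiv (Equiv.mulRight (Pi.mulSingle k (-1))) (fun ε => ?_) fun _ _ => rfl
  have hcases : ∏ j, (ε j : ℤ) = 1 ∨ ∏ j, (ε j : ℤ) = -1 := by
    rw [← Units.coe_prod]
    exact Int.isUnit_iff.1 (Units.isUnit _)
  simp only [Finset.mem_filter_univ, Equiv.coe_mulRight, prod_mul_mulSingle_neg_one]
  omega

lemma sum_signs_exp (x : ι → ℂ) :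
    ∑ ε : ι → ℤˣ, Complex.exp (Complex.I * ∑ j, (ε j : ℤ) * x j) = ∏ j, 2 * Complex.cos (x j) := by
  have hfactor (j : ι) : 2 * Complex.cos (x j) =
      ∑ u : ℤˣ, Complex.exp (Complex.I * ((u : ℤ) * x j)) := by
    rw [show (Finset.univ : Finset ℤˣ) = {1, -1} from rfl, Finset.sum_pair (by decide),
      Complex.two_cos]
    simp [mul_comm]
  simp only [hfactor, Finset.prod_univ_sum, Fintype.piFinset_univ, Finset.mul_sum, Complex.exp_sum]

lemma sum_even_signs_exp_add_update_neg (x : ι → ℂ) (k : ι) :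
    ∑ ε : ι → ℤˣ with ∏ j, (ε j : ℤ) = 1, Complex.exp (Complex.I * ∑ j, (ε j : ℤ) * x j) +
      ∑ ε : ι → ℤˣ with ∏ j, (ε j : ℤ) = 1,
        Complex.exp (Complex.I * ∑ j, (ε j : ℤ) * Function.update x k (-x k) j) =
      ∏ j, 2 * Complex.cos (x j) := by
  rw [← sum_signs_exp, ← sum_even_signs_add_flip k]
  congr 1
  refine Finset.sum_congr rfl fun ε _ => ?_
  congr 2
  refine Finset.sum_congr rfl fun j _ => ?_
  rcases eq_or_ne j k with rfl | hj
  · simp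
  · simp [hj]

end SignChanges

section CosineDeterminants

variable {m : ℕ}

/-- The determinant `det (2 cos (λ_i θ_j))`: the analogue of `A_λ` in which all sign changes, not
only the even ones, are allowed. -/
noncomputable def cosDet (lam : Fin m → ℤ) (θ : Fin m → ℝ) : ℂ :=
  (Matrix.of fun i j => 2 * Complex.cos (lam i * θ j)).det

lemma Avec_add_Avec_update_neg (lam : Fin m → ℤ) (k : Fin m) (θ : Fin m → ℝ) :
    Avec m lam θ + Avec m (Function.update lam k (-lam k)) θ = cosDet lam θ := by
  rw [cosDet, Matrix.det_apply', ← Equiv.sum_comp (Equiv.inv (Equiv.Perm (Fin m))), Avec, Avec,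
    ← Finset.sum_add_distrib]
  refine Finset.sum_congr rfl fun σ _ => ?_
  have hupdate (j : Fin m) : (Function.update lam k (-lam k) (σ⁻¹ j) : ℂ) * θ j =
      Function.update (fun j => (lam (σ⁻¹ j) : ℂ) * θ j) (σ k)
        (-(lam (σ⁻¹ (σ k)) * θ (σ k))) j := by
    rcases eq_or_ne j (σ k) with rfl | hj
    · simp
    · have hne : σ⁻¹ j ≠ k := fun h => hj (by simp [← h])
      rw [Function.update_of_ne hne, Function.update_of_ne hj]
  simp only [Equiv.inv_apply, Equiv.Perm.sign_inv, Matrix.of_apply, ← Finset.mul_sum, ← mul_add,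
    ← sum_even_signs_exp_add_update_neg _ (σ k), Int.cast_mul, mul_assoc, hupdate]

lemma two_mul_Avec_of_eq_zero {lam : Fin m → ℤ} {k : Fin m} (hk : lam k = 0) (θ : Fin m → ℝ) :
    2 * Avec m lam θ = cosDet lam θ := by
  have hfix : Function.update lam k (-lam k) = lam := by
    rw [hk, neg_zero, ← hk, Function.update_eq_self]
  rw [← Avec_add_Avec_update_neg lam k, hfix, two_mul]

lemma two_mul_cos_mul_two_mul_cos (l : ℤ) (x : ℂ) :
    2 * Complex.cos x * (2 * Complex.cos (l * x)) =
      2 * Complex.cos ((l + 1 : ℤ) * x) + 2 * Complex.cos ((l - 1 : ℤ) * x) := by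
  push_cast
  rw [add_mul, sub_mul, one_mul, Complex.cos_add, Complex.cos_sub]
  ring

lemma prod_two_mul_cos_mul_cosDet_deltaVec (hm : 1 ≤ m) (θ : Fin m → ℝ) :
    (∏ j, 2 * Complex.cos (θ j)) * cosDet (deltaVec m) θ =
      2 * ∑ j ∈ Finset.range (m / 2 + 1), (-1) ^ j *
        cosDet (fun i => deltaVec m i + omegaVec m (m - 2 * j) i) θ := by
  let a : ℤ → Fin m → ℂ := fun l j => 2 * Complex.cos (l * θ j)
  have ha : a (-1) = a 1 := by simp [a]
  have hmul : (Matrix.of fun i j : Fin m =>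
      2 * Complex.cos (θ j) * (2 * Complex.cos (deltaVec m i * θ j))) =
      Matrix.of fun i => a (deltaVec m i + 1) + a (deltaVec m i - 1) := by
    ext i j
    exact two_mul_cos_mul_two_mul_cos _ _
  rw [cosDet, ← Matrix.det_mul_row]
  simp only [Matrix.of_apply, hmul, det_deltaVec_shift hm ha]
  rfl

lemma two_mul_Avec_deltaVec (hm : 1 ≤ m) (θ : Fin m → ℝ) :
    2 * Avec m (deltaVec m) θ = cosDet (deltaVec m) θ :=
  two_mul_Avec_of_eq_zero (k := ⟨m - 1, by omega⟩) (by simp only [deltaVec]; omega) θ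

lemma two_mul_Avec_deltaVec_add_omegaVec {q : ℕ} (hq : q < m) (θ : Fin m → ℝ) :
    2 * Avec m (fun i => deltaVec m i + omegaVec m q i) θ =
      cosDet (fun i => deltaVec m i + omegaVec m q i) θ := by
  refine two_mul_Avec_of_eq_zero (k := ⟨m - 1, by omega⟩) ?_ θ
  rw [deltaVec, omegaVec, if_neg (by simp only; omega)]
  simp only
  omega

lemma Avec_deltaVec_add_one_add_Avec (hm : 1 ≤ m) (θ : Fin m → ℝ) :
    Avec m (fun j => deltaVec m j + 1) θ +
        Avec m (fun j => deltaVec m j + (if (j : ℕ) = m - 1 then -1 else 1)) θ =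
      cosDet (fun i => deltaVec m i + omegaVec m m i) θ := by
  have homega : (fun i => deltaVec m i + omegaVec m m i) = fun i => deltaVec m i + 1 := by
    simp [omegaVec]
  rw [homega, ← Avec_add_Avec_update_neg _ ⟨m - 1, by omega⟩]
  congr 2
  ext i
  simp only [Function.update_apply, Fin.ext_iff, deltaVec]
  split_ifs <;> omega

end CosineDeterminants

/-- The `k = m` case of the expansion of the elementary symmetric function `S_{m,m}`
of the `2cos θ_j` into irreducible characters of `SO(2m)`, multiplied by the Weyl
denominator `A_δ`. -/
theorem smm_expansion (m : ℕ) (hm : 1 ≤ m) (θ : Fin m → ℝ) :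
    Avec m (deltaVec m) θ * ∏ j : Fin m, ((2 * Real.cos (θ j) : ℝ) : ℂ) =
    (Avec m (fun j => deltaVec m j + 1) θ +
     Avec m (fun j => deltaVec m j + (if (j : ℕ) = m - 1 then -1 else 1)) θ) +
    ∑ j ∈ Finset.Icc 1 (m / 2),
      (-1 : ℂ) ^ j * (Nfun (2 * j) j : ℂ) *
        Avec m (fun i => deltaVec m i + omegaVec m (m - 2 * j) i) θ := by
  have hterm : ∀ j ∈ Finset.Icc 1 (m / 2), (-1 : ℂ) ^ j * (Nfun (2 * j) j : ℂ) *
      Avec m (fun i => deltaVec m i + omegaVec m (m - 2 * j) i) θ =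
      (-1) ^ j * cosDet (fun i => deltaVec m i + omegaVec m (m - 2 * j) i) θ := by
    intro j hj
    rw [Finset.mem_Icc] at hj
    rw [Nfun_two_mul_self (by omega), Nat.cast_two, mul_assoc,
      two_mul_Avec_deltaVec_add_omegaVec (by omega)]
  have hexpand := prod_two_mul_cos_mul_cosDet_deltaVec hm θ
  rw [← two_mul_Avec_deltaVec hm, mul_left_comm, Finset.range_eq_Ico,
    Finset.sum_eq_sum_Ico_succ_bot (Nat.add_one_pos _), zero_add, Finset.Ico_add_one_right_eq_Icc,
    pow_zero, one_mul, mul_zero, Nat.sub_zero] at hexpand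
  rw [Avec_deltaVec_add_one_add_Avec hm, Finset.sum_congr rfl hterm,
    ← mul_left_cancel₀ two_ne_zero hexpand, mul_comm]
  push_cast
  rfl
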